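/- Let a > 0 and let R_1(a) = sup{R > 0 : g(·;a) > 0 on (0,R)}. Then the following are equivalent: (i) there exists r̄ ∈ (0,R_1(a)) with J(r̄;a) < 0; (ii) g(r;a) > 0 for all r ∈ (0,∞) and w(·;a) = ρ·g(·;a) is unbounded on (0,∞). Moreover, if (ii) holds, then J(r;a) → -∞ as r → ∞. -/

import Mathlib

/-!
# Sign of the Pohozaev functional and slow decay

Put `n = N - 1`, `q = 1 / (p - 1) > 1` and `h = ρ' / ρ = 1 + n / r`. As long as `g ≥ 0`, the profile
equation is the first-order system `f' = -g ^ q`, `g' = f - h g` (`PosSys`), so `w' = ρ f`. On this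
region `J` is the function `KFun` of `(r, f, g)`, and the weights `α, β, γ, δ` are chosen such that
`J' = p / (3p - 2)³ · P(1 / r) · α g²` with a cubic `P = PolyG` (`PosSys.hasDerivAt_K`). The
coefficients of `P` in degrees `0` and `1` are nonpositive and, thanks to `p > 2N / (N + 1)`, the
one in degree `3` is nonnegative. Hence `P(x) / x²` is nondecreasing, so that as `r` grows `P(1 / r)`
changes sign at most once, from plus to minus (`polyG_scale`).

*A negative value forces (ii).* Completing the square gives `J ≥ -h² α g²` (`PosSys.K_ge`), whose
right side tends to `0` at `0`. If `J(R) < 0`, then `J` cannot have increased on all of `(0, R]`, so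
`P(1 / R) < 0` and `J` decreases after `R` while `g ≥ 0`. At a first zero of `g` one would have
`J ≥ 0`, so `g` never vanishes. If `w` were bounded, then `h² α g² = h² ρ^{2p/(3p-2) - 2} w²` would
tend to `0`, contradicting `J ≤ J(R) < 0`.

*Condition (ii) forces `J → -∞`.* If `g > 0` everywhere then `f > 0`, and `f` and `g` tend to `0`.
The quotient `u = f / g = w' / w` solves `u' = u (h - u) - g ^ (q - 1)`, a perturbation of
`u' = u (1 - u)`. If `u` stays below `ε = (2 - p) / 2`, then `w` grows at most like `e^{εr}`, which
makes `w' = ρ f = ρ ∫_r^∞ g ^ q` integrable, so `w` is bounded (`PosSys.w_bounded`). Otherwise `u`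
is eventually at least `ε` (`PosSys.f_ge_persist`), and then it climbs above `3 / 4`
(`PosSys.f_ge`). Since `(α g²)' = 2 α g² (u - c h)` with `c = 2(p - 1) / (3p - 2) < 1 / 2`, the
quantity `α g²` is eventually nondecreasing; as `P(0) < 0`, the derivative of `J` is eventually
below a negative constant (`PosSys.tendsto_K`).
-/

open Real Set Filter MeasureTheory

/-- `f` is a solution of the profile equation with parameter `a`:
`f` is C¹ on `[0,∞)` with derivative `f'`, the map `r ↦ |f'(r)|^{p-2} f'(r)` is C¹ on `[0,∞)`
with derivative `F'`, the ODE
`(|f'|^{p-2}f')'(r) + ((N-1)/r)(|f'|^{p-2}f')(r) + f(r) - |f'(r)|^{p-1} = 0` holds for `r > 0`,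
and `f 0 = a`, `f' 0 = 0`. -/
def IsProfileSol (N : ℕ) (p a : ℝ) (f f' F' : ℝ → ℝ) : Prop :=
  (∀ r ∈ Ici (0:ℝ), HasDerivWithinAt f (f' r) (Ici 0) r) ∧
  ContinuousOn f' (Ici 0) ∧
  (∀ r ∈ Ici (0:ℝ), HasDerivWithinAt (fun s => |f' s| ^ (p - 2) * f' s) (F' r) (Ici 0) r) ∧
  ContinuousOn F' (Ici 0) ∧
  (∀ r, 0 < r →
    F' r + (((N : ℝ) - 1) / r) * (|f' r| ^ (p - 2) * f' r) + f r - |f' r| ^ (p - 1) = 0) ∧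
  f 0 = a ∧ f' 0 = 0

/-- `g(r;a) = -|f'(r;a)|^{p-2} f'(r;a)`. -/
noncomputable def gFun (p : ℝ) (f' : ℝ → ℝ) (r : ℝ) : ℝ := -(|f' r| ^ (p - 2) * f' r)

/-- `ρ(r) = r^{N-1} e^r`. -/
noncomputable def rho (N : ℕ) (r : ℝ) : ℝ := r ^ (N - 1) * Real.exp r

/-- the derivative of `ρ`. -/
noncomputable def rho' (N : ℕ) (r : ℝ) : ℝ :=
  (((N : ℝ) - 1) * r ^ (N - 2) + r ^ (N - 1)) * Real.exp r

/-- `w(r;a) = ρ(r) g(r;a)`. -/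
noncomputable def wFun (N : ℕ) (p : ℝ) (f' : ℝ → ℝ) (r : ℝ) : ℝ := rho N r * gFun p f' r

/-- the derivative `w'(r;a) = ρ'(r) g(r;a) + ρ(r) g'(r;a)`, where `g' = -F'`. -/
noncomputable def wDeriv (N : ℕ) (p : ℝ) (f' F' : ℝ → ℝ) (r : ℝ) : ℝ :=
  rho' N r * gFun p f' r - rho N r * F' r

/-- `α(r) = ρ(r)^{2p/(3p-2)}`. -/
noncomputable def alphaFun (N : ℕ) (p r : ℝ) : ℝ := rho N r ^ (2 * p / (3 * p - 2))

/-- `β(r) = (2(p-1)/(3p-2))(1 + (N-1)/r) α(r)`. -/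
noncomputable def betaFun (N : ℕ) (p r : ℝ) : ℝ :=
  (2 * (p - 1) / (3 * p - 2)) * (1 + ((N : ℝ) - 1) / r) * alphaFun N p r

/-- `γ(r)`. -/
noncomputable def gammaFun (N : ℕ) (p r : ℝ) : ℝ :=
  -(2 * (p - 1) * (2 - p) / (3 * p - 2) ^ 2
      + (4 * ((N : ℝ) - 1) * (p - 1) * (2 - p) / (3 * p - 2) ^ 2) * (1 / r)
      + (((N : ℝ) - 1) / (3 * p - 2) ^ 2)
          * (p * (3 * p - 2) + 2 * ((N : ℝ) - 1) * (p - 1) * (2 - p)) * (1 / r ^ 2))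
    * alphaFun N p r

/-- The Pohozaev functional
`J(r;a) = (1/2)α g'² + β g g' + (1/2)γ g² + ((p-1)/p) δ g^{p/(p-1)}`, with `δ = α`, `g' = -F'`. -/
noncomputable def Jfun (N : ℕ) (p : ℝ) (f' F' : ℝ → ℝ) (r : ℝ) : ℝ :=
  (1 / 2) * alphaFun N p r * (-(F' r)) ^ 2 + betaFun N p r * gFun p f' r * (-(F' r))
    + (1 / 2) * gammaFun N p r * gFun p f' r ^ 2
    + ((p - 1) / p) * alphaFun N p r * gFun p f' r ^ (p / (p - 1))


open Topology

/-! ### The growth factor of the functional -/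

/-- The logarithmic derivative of `ρ`, that is `h(r) = 1 + (N - 1) / r`. -/
noncomputable def hFun (N : ℕ) (r : ℝ) : ℝ := 1 + ((N : ℝ) - 1) / r

/-- The cubic `P` (with `n = N - 1`) such that `J' = p / (3p - 2)³ · P(1 / r) · α g²`. -/
noncomputable def PolyG (n p x : ℝ) : ℝ :=
  -(2 * (p - 1) * (2 - p)) * (1 + n * x) ^ 3 - (4 - 3 * p) * (3 * p - 2) * (1 + n * x) * n * x ^ 2
    + (3 * p - 2) ^ 2 * n * x ^ 3

/-- `P(x) / x²` is nondecreasing on `x > 0`, so a nonnegative value of `P` persists to the right.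
The hypothesis `hnp` is `p ≥ 2N / (N + 1)` for `n = N - 1`; it makes the cubic coefficient of `P`
nonnegative. -/
theorem polyG_scale {n p x y : ℝ} (hn : 0 ≤ n) (hp1 : 1 < p) (hp2 : p < 2)
    (hnp : n * (2 - p) ≤ 2 * (p - 1)) (hx : 0 < x) (hxy : x ≤ y) (h : 0 ≤ PolyG n p x) :
    0 ≤ PolyG n p y := by
  have key : x ^ 2 * PolyG n p y - y ^ 2 * PolyG n p x =
      (2 * (p - 1) * (2 - p)) * (y ^ 2 - x ^ 2)
      + (6 * n * (p - 1) * (2 - p)) * (x * y * (y - x))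
      + n * ((3 * p - 2) ^ 2 + (3 * p - 4) * (3 * p - 2) * n - 2 * (p - 1) * (2 - p) * n ^ 2)
        * (x ^ 2 * y ^ 2 * (y - x)) := by
    unfold PolyG; ring
  have ha3 : 0 ≤ (3 * p - 2) ^ 2 + (3 * p - 4) * (3 * p - 2) * n
      - 2 * (p - 1) * (2 - p) * n ^ 2 := by
    have h1 : 2 * (p - 1) * (2 - p) * n ^ 2 ≤ 4 * (p - 1) ^ 2 * n := by
      have := mul_le_mul_of_nonneg_left hnp (mul_nonneg (by linarith : 0 ≤ 2 * (p - 1)) hn)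
      nlinarith
    have h2 : 0 ≤ (5 * (p - 1) ^ 2 - 1) * n + (3 * p - 2) ^ 2 := by
      by_cases h5 : 0 ≤ 5 * (p - 1) ^ 2 - 1
      · positivity
      · push Not at h5
        -- multiplied by `2 - p`, the bound on `n` turns the sum into at least `p ^ 3`
        have h3 : 0 ≤ ((5 * (p - 1) ^ 2 - 1) * n + (3 * p - 2) ^ 2) * (2 - p) := by
          have := mul_le_mul_of_nonpos_left hnp h5.le
          have h4 : (5 * (p - 1) ^ 2 - 1) * (2 * (p - 1)) + (3 * p - 2) ^ 2 * (2 - p) = p ^ 3 := by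
            ring
          have : 0 < p ^ 3 := by positivity
          nlinarith
        exact nonneg_of_mul_nonneg_left h3 (by linarith)
    nlinarith
  have hy : 0 < y := hx.trans_le hxy
  have h1 : 0 ≤ (p - 1) * (2 - p) := mul_nonneg (by linarith) (by linarith)
  have h2 : 0 ≤ y ^ 2 - x ^ 2 := by nlinarith
  have h3 : 0 ≤ y - x := by linarith
  have h4 : 0 ≤ x ^ 2 * PolyG n p y := by
    have e1 : 0 ≤ (2 * (p - 1) * (2 - p)) * (y ^ 2 - x ^ 2) := by
      have := mul_nonneg h1 h2; linarith
    have e2 : 0 ≤ (6 * n * (p - 1) * (2 - p)) * (x * y * (y - x)) := by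
      have := mul_nonneg (mul_nonneg hn h1) (mul_nonneg (mul_nonneg hx.le hy.le) h3); linarith
    have e3 := mul_nonneg (mul_nonneg hn ha3)
      (mul_nonneg (by positivity : 0 ≤ x ^ 2 * y ^ 2) h3)
    have e4 := mul_nonneg (sq_nonneg y) h
    linarith
  exact nonneg_of_mul_nonneg_right h4 (by positivity)

/-! ### The weight functions and comparison lemmas -/

theorem rho_pos (N : ℕ) {r : ℝ} (hr : 0 < r) : 0 < rho N r := by unfold rho; positivity

theorem alpha_pos (N : ℕ) (p : ℝ) {r : ℝ} (hr : 0 < r) : 0 < alphaFun N p r :=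
  rpow_pos_of_pos (rho_pos N hr) _

theorem hasDerivAt_rho {N : ℕ} (hN : 1 ≤ N) {r : ℝ} (hr : 0 < r) :
    HasDerivAt (rho N) (hFun N r * rho N r) r := by
  obtain ⟨k, rfl⟩ := Nat.exists_eq_add_of_le' hN
  have := (hasDerivAt_pow k r).mul (Real.hasDerivAt_exp r)
  refine this.congr_deriv ?_
  unfold hFun rho
  rcases k with _ | k
  · simp
  · push_cast
    simp only [pow_succ]
    field_simp
    ring

theorem hasDerivAt_alpha {N : ℕ} (hN : 1 ≤ N) (p : ℝ) {r : ℝ} (hr : 0 < r) :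
    HasDerivAt (alphaFun N p) (2 * p / (3 * p - 2) * hFun N r * alphaFun N p r) r := by
  have h0 := rho_pos N hr
  have := (hasDerivAt_rho hN hr).rpow_const (p := 2 * p / (3 * p - 2)) (Or.inl h0.ne')
  refine this.congr_deriv ?_
  unfold alphaFun
  rw [rpow_sub_one h0.ne']
  field_simp

theorem le_of_deriv_nonneg {φ φ' : ℝ → ℝ} {x y : ℝ} (hxy : x ≤ y)
    (hd : ∀ r ∈ Icc x y, HasDerivAt φ (φ' r) r) (hn : ∀ r ∈ Icc x y, 0 ≤ φ' r) : φ x ≤ φ y := by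
  refine monotoneOn_of_hasDerivWithinAt_nonneg (convex_Icc x y)
    (fun r hr => (hd r hr).continuousAt.continuousWithinAt)
    (fun r hr => (hd r (interior_subset hr)).hasDerivWithinAt)
    (fun r hr => hn r (interior_subset hr)) (left_mem_Icc.2 hxy) (right_mem_Icc.2 hxy) hxy

theorem le_of_deriv_nonpos {φ φ' : ℝ → ℝ} {x y : ℝ} (hxy : x ≤ y)
    (hd : ∀ r ∈ Icc x y, HasDerivAt φ (φ' r) r) (hn : ∀ r ∈ Icc x y, φ' r ≤ 0) : φ y ≤ φ x :=
  neg_le_neg_iff.1 <| le_of_deriv_nonneg (φ := fun r => -φ r) hxy (fun r hr => (hd r hr).neg)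
    (fun r hr => neg_nonneg.2 (hn r hr))

/-- If `φ` decreases at a definite rate it cannot stay positive. -/
theorem not_pos_of_deriv_le {φ φ' : ℝ → ℝ} {R d : ℝ} (hdp : 0 < d)
    (hd : ∀ r, R ≤ r → HasDerivAt φ (φ' r) r) (hn : ∀ r, R ≤ r → φ' r ≤ -d)
    (hpos : ∀ r, R ≤ r → 0 < φ r) : False := by
  have h0 := hpos R le_rfl
  have hs : R ≤ R + φ R / d := by have := div_pos h0 hdp; linarith
  have := le_of_deriv_nonpos (φ := fun r => φ r + d * r) hs
    (fun t ht => (hd t ht.1).add ((hasDerivAt_id t).const_mul d))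
    (fun t ht => by have := hn t ht.1; linarith)
  have h1 := hpos _ hs
  have h2 : d * (R + φ R / d) = d * R + φ R := by field_simp
  simp only [h2] at this
  linarith

/-- Linear comparison: `φ' ≥ -k (φ - c)` keeps `e^{kr}(φ - c)` from decreasing. -/
theorem exp_mul_sub_le {φ φ' : ℝ → ℝ} {k c x y : ℝ} (hxy : x ≤ y)
    (hd : ∀ r ∈ Icc x y, HasDerivAt φ (φ' r) r) (hn : ∀ r ∈ Icc x y, 0 ≤ φ' r + k * (φ r - c)) :
    Real.exp (k * x) * (φ x - c) ≤ Real.exp (k * y) * (φ y - c) := by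
  refine le_of_deriv_nonneg (φ := fun r => Real.exp (k * r) * (φ r - c))
    (φ' := fun r => Real.exp (k * r) * (φ' r + k * (φ r - c))) hxy (fun r hr => ?_)
    (fun r hr => mul_nonneg (Real.exp_pos _).le (hn r hr))
  have := ((hasDerivAt_id r).const_mul k).exp.mul ((hd r hr).sub_const c)
  refine this.congr_deriv ?_
  simp only [id]; ring

/-! ### The first-order system and the functional -/

/-- The first-order system `f' = -g ^ (1 / (p - 1))`, `g' = f - h g`, required only at the radii
where `g ≥ 0`, together with the admissible range of `p`; `hnp` is `p ≥ 2N / (N + 1)`. -/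
structure PosSys (N : ℕ) (p : ℝ) (f g : ℝ → ℝ) : Prop where
  hN : 2 ≤ N
  hp1 : 1 < p
  hp2 : p < 2
  hnp : ((N : ℝ) - 1) * (2 - p) ≤ 2 * (p - 1)
  df : ∀ r, 0 < r → 0 ≤ g r → HasDerivAt f (-(g r ^ (1 / (p - 1)))) r
  dg : ∀ r, 0 < r → 0 ≤ g r → HasDerivAt g (f r - hFun N r * g r) r

/-- The Pohozaev functional with `g'` replaced by `f - h g`; it agrees with `J` where `g ≥ 0`. -/
noncomputable def KFun (N : ℕ) (p : ℝ) (f g : ℝ → ℝ) (r : ℝ) : ℝ :=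
  (1 / 2) * alphaFun N p r * (f r - hFun N r * g r) ^ 2
    + betaFun N p r * g r * (f r - hFun N r * g r)
    + (1 / 2) * gammaFun N p r * g r ^ 2
    + ((p - 1) / p) * alphaFun N p r * g r ^ (p / (p - 1))

namespace PosSys

variable {N : ℕ} {p : ℝ} {f g : ℝ → ℝ}

theorem n_ge (S : PosSys N p f g) : (1 : ℝ) ≤ (N : ℝ) - 1 := by
  have : (2 : ℝ) ≤ N := by exact_mod_cast S.hN
  linarith

theorem rpow_split (S : PosSys N p f g) {t : ℝ} (ht : 0 ≤ t) :
    t ^ (p / (p - 1)) = t ^ (1 / (p - 1)) * t := by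
  have h1 : 0 < p - 1 := by linarith [S.hp1]
  have h2 : p / (p - 1) = 1 / (p - 1) + 1 := by field_simp; ring
  have : 0 < 1 / (p - 1) := by positivity
  rw [h2, rpow_add_one' ht (by positivity)]

/-- The Pohozaev identity: only a multiple of `α g²` survives in `J'`. Zeros of `g` are allowed,
since `t ↦ t ^ (p / (p - 1))` is differentiable at `0`. -/
theorem hasDerivAt_K (S : PosSys N p f g) {r : ℝ} (hr : 0 < r) (hg : 0 ≤ g r) :
    HasDerivAt (KFun N p f g)
      (p / (3 * p - 2) ^ 3 * PolyG ((N : ℝ) - 1) p (1 / r) * (alphaFun N p r * g r ^ 2)) r := by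
  have h1 : 0 < p - 1 := by linarith [S.hp1]
  have hD : 0 < 3 * p - 2 := by linarith
  have hp : 0 < p := by linarith
  have dA := hasDerivAt_alpha (N := N) (by have := S.hN; omega) p hr
  have dx := hasDerivAt_inv hr.ne'
  have dF := S.df r hr hg
  have dG := S.dg r hr hg
  have hq : p / (p - 1) = 1 / (p - 1) + 1 := by field_simp; ring
  have dP : HasDerivAt (fun s => g s ^ (p / (p - 1)))
      ((f r - hFun N r * g r) * (p / (p - 1)) * g r ^ (1 / (p - 1))) r := by
    have := dG.rpow_const (p := p / (p - 1))
      (Or.inr (by rw [hq]; linarith [(by positivity : 0 < 1 / (p - 1))]))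
    refine this.congr_deriv ?_
    congr 2
    rw [hq]; ring
  have dh : HasDerivAt (hFun N) (((N : ℝ) - 1) * -(r ^ 2)⁻¹) r := by
    refine ((dx.const_mul ((N : ℝ) - 1)).const_add 1).congr_of_eventuallyEq ?_
    exact Filter.Eventually.of_forall fun s => by simp [hFun, div_eq_mul_inv]
  have dw := dF.sub (dh.mul dG)
  have dB : HasDerivAt (betaFun N p) _ r :=
    ((dh.const_mul (2 * (p - 1) / (3 * p - 2))).mul dA)
  have dC : HasDerivAt (gammaFun N p) _ r :=
    (((((dx.const_mul (4 * ((N : ℝ) - 1) * (p - 1) * (2 - p) / (3 * p - 2) ^ 2)).const_add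
      (2 * (p - 1) * (2 - p) / (3 * p - 2) ^ 2)).add
      ((dx.pow 2).const_mul ((((N : ℝ) - 1) / (3 * p - 2) ^ 2)
          * (p * (3 * p - 2) + 2 * ((N : ℝ) - 1) * (p - 1) * (2 - p))))).neg).mul dA
      ).congr_of_eventuallyEq (Filter.Eventually.of_forall fun s => by
        simp [gammaFun, div_eq_mul_inv])
  have dK := ((((dA.const_mul (1 / 2)).mul (dw.pow 2)).add ((dB.mul dG).mul dw)).add
    ((dC.const_mul (1 / 2)).mul (dG.pow 2))).add ((dA.const_mul ((p - 1) / p)).mul dP)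
  refine (dK.congr_deriv ?_)
  simp only [Pi.mul_apply, Pi.sub_apply, Pi.pow_apply, Pi.add_apply, Pi.neg_apply, Nat.reduceSub,
    pow_one, Nat.cast_ofNat]
  rw [S.rpow_split hg]
  unfold betaFun gammaFun PolyG hFun
  generalize alphaFun N p r = A
  generalize g r ^ (1 / (p - 1)) = B
  generalize g r = G
  generalize f r = F
  generalize (N : ℝ) - 1 = n
  obtain ⟨D, hDe⟩ : ∃ D, D = 3 * p - 2 := ⟨_, rfl⟩
  rw [← hDe] at hD ⊢
  field_simp
  rw [hDe]
  ring

/-- Lower bound obtained by completing the square in `g'` and dropping the term in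
`g ^ (p / (p - 1))`. -/
theorem K_ge (S : PosSys N p f g) {r : ℝ} (hr : 0 < r) (hg : 0 ≤ g r) :
    -(hFun N r ^ 2 * (alphaFun N p r * g r ^ 2)) ≤ KFun N p f g r := by
  have h1 : 0 < p - 1 := by linarith [S.hp1]
  have hD : 0 < 3 * p - 2 := by linarith
  have hp : 0 < p := by linarith
  have hA := alpha_pos N p hr
  have hn := S.n_ge
  set n := (N : ℝ) - 1 with hnd
  set c := 2 * (p - 1) / (3 * p - 2) with hc
  have hc0 : 0 ≤ c := by positivity
  have hc1 : c ≤ 1 / 2 := by rw [hc, div_le_iff₀ hD]; linarith [S.hp2]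
  have e : KFun N p f g r = 1 / 2 * alphaFun N p r * (f r - hFun N r * g r + c * hFun N r * g r) ^ 2
      + ((p - 1) / p) * alphaFun N p r * g r ^ (p / (p - 1))
      - 1 / 2 * alphaFun N p r * g r ^ 2 *
        ((c ^ 2 + c * ((2 - p) / (3 * p - 2))) * hFun N r ^ 2 + (1 - c) * (n / r ^ 2)) := by
    unfold KFun betaFun gammaFun hFun
    rw [← hnd, hc]
    generalize g r ^ (p / (p - 1)) = B
    obtain ⟨D, hDe⟩ : ∃ D, D = 3 * p - 2 := ⟨_, rfl⟩
    rw [← hDe] at hD ⊢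
    field_simp
    rw [hDe]
    ring
  have h3 : n / r ^ 2 ≤ hFun N r ^ 2 := by
    unfold hFun
    rw [← hnd]
    have : n / r ^ 2 ≤ (n / r) ^ 2 := by
      rw [div_pow]; gcongr; nlinarith
    have : 0 ≤ n / r := by positivity
    nlinarith
  have h4 : (2 - p) / (3 * p - 2) ≤ 1 := by rw [div_le_iff₀ hD]; linarith
  have h5 : c ^ 2 + c * ((2 - p) / (3 * p - 2)) + (1 - c) ≤ 2 := by nlinarith
  have h6 : (c ^ 2 + c * ((2 - p) / (3 * p - 2))) * hFun N r ^ 2 + (1 - c) * (n / r ^ 2)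
      ≤ 2 * hFun N r ^ 2 := by
    have := mul_le_mul_of_nonneg_left h3 (by linarith : 0 ≤ 1 - c)
    nlinarith [mul_le_mul_of_nonneg_right h5 (sq_nonneg (hFun N r))]
  have h7 := mul_le_mul_of_nonneg_left h6 (by positivity : 0 ≤ 1 / 2 * alphaFun N p r * g r ^ 2)
  have h8 : 0 ≤ 1 / 2 * alphaFun N p r * (f r - hFun N r * g r + c * hFun N r * g r) ^ 2 := by
    positivity
  have h9 : 0 ≤ ((p - 1) / p) * alphaFun N p r * g r ^ (p / (p - 1)) := by positivity
  rw [e]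
  linarith

theorem polyG_nonneg_of (S : PosSys N p f g) {r s : ℝ} (hr : 0 < r) (hrs : r ≤ s)
    (h : 0 ≤ PolyG ((N : ℝ) - 1) p (1 / s)) : 0 ≤ PolyG ((N : ℝ) - 1) p (1 / r) :=
  polyG_scale (by linarith [S.n_ge]) S.hp1 S.hp2 S.hnp (by have := hr.trans_le hrs; positivity)
    (one_div_le_one_div_of_le hr hrs) h

/-- Where the functional is negative it is already decreasing: otherwise it would be monotone on
`(0, R]`, and it is bounded below there by a function tending to `0` at `0`. -/
theorem polyG_neg_of_K_neg (S : PosSys N p f g) {R : ℝ} (hR : 0 < R)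
    (hg : ∀ s, 0 < s → s ≤ R → 0 < g s)
    (hO' : ∃ C, ∀ᶠ s in 𝓝[>] (0 : ℝ), g s ≤ C * s)
    (hK : KFun N p f g R < 0) : PolyG ((N : ℝ) - 1) p (1 / R) < 0 := by
  by_contra! hP
  have h1 : 0 < p - 1 := by linarith [S.hp1]
  have hD : 0 < 3 * p - 2 := by linarith
  have hn := S.n_ge
  have mono : ∀ s, 0 < s → s ≤ R → KFun N p f g s ≤ KFun N p f g R := by
    intro s hs hsR
    refine le_of_deriv_nonneg hsR
      (fun r hr => S.hasDerivAt_K (hs.trans_le hr.1) (hg r (hs.trans_le hr.1) hr.2).le) ?_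
    intro r hr
    have hr0 := hs.trans_le hr.1
    have := S.polyG_nonneg_of hr0 hr.2 hP
    have := alpha_pos N p hr0
    have : 0 < p := by linarith
    positivity
  obtain ⟨C, hC⟩ := hO'
  have hρ : Tendsto (rho N) (𝓝[>] 0) (𝓝 0) := by
    have : Continuous (rho N) := by unfold rho; fun_prop
    have h0 : rho N 0 = 0 := by
      unfold rho; rw [zero_pow (by have := S.hN; omega)]; simp
    have := this.tendsto 0
    rw [h0] at this
    exact this.mono_left nhdsWithin_le_nhds
  have hA : Tendsto (alphaFun N p) (𝓝[>] 0) (𝓝 0) := by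
    have hm : 0 < 2 * p / (3 * p - 2) := by have := S.hp1; positivity
    have := hρ.rpow_const (p := 2 * p / (3 * p - 2)) (Or.inr hm.le)
    rwa [zero_rpow hm.ne'] at this
  have hlim : Tendsto (fun s : ℝ => -(alphaFun N p s * (C * (s + ((N : ℝ) - 1))) ^ 2)) (𝓝[>] 0)
      (𝓝 0) := by
    have h2 : Tendsto (fun s : ℝ => (C * (s + ((N : ℝ) - 1))) ^ 2) (𝓝[>] 0)
        (𝓝 ((C * (0 + ((N : ℝ) - 1))) ^ 2)) := by
      have : Continuous (fun s : ℝ => (C * (s + ((N : ℝ) - 1))) ^ 2) := by fun_prop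
      exact (this.tendsto 0).mono_left nhdsWithin_le_nhds
    simpa using (hA.mul h2).neg
  have : (0 : ℝ) ≤ KFun N p f g R := by
    refine le_of_tendsto hlim ?_
    have hlt : ∀ᶠ s : ℝ in 𝓝[>] 0, s < R := nhdsWithin_le_nhds (Iio_mem_nhds hR)
    filter_upwards [hC, self_mem_nhdsWithin, hlt] with s hs hs0 hsR
    have hs0 : 0 < s := hs0
    have hgs := hg s hs0 hsR.le
    refine le_trans ?_ ((S.K_ge hs0 hgs.le).trans (mono s hs0 hsR.le))
    have e : hFun N s * g s ≤ C * (s + ((N : ℝ) - 1)) := by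
      have hh : hFun N s * s = s + ((N : ℝ) - 1) := by unfold hFun; field_simp
      have hpos : 0 ≤ hFun N s := by unfold hFun; positivity
      calc hFun N s * g s ≤ hFun N s * (C * s) := by gcongr
        _ = C * (hFun N s * s) := by ring
        _ = _ := by rw [hh]
    have hpos : 0 ≤ hFun N s * g s := by unfold hFun; positivity
    have hA0 := alpha_pos N p hs0
    have := mul_le_mul_of_nonneg_left (pow_le_pow_left₀ hpos e 2) hA0.le
    nlinarith
  linarith


/-! ### Decay of globally positive solutions -/

theorem hFun_ge_one (S : PosSys N p f g) {r : ℝ} (hr : 0 < r) : 1 ≤ hFun N r := by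
  have := S.n_ge
  have : 0 ≤ ((N : ℝ) - 1) / r := by positivity
  unfold hFun; linarith

theorem hFun_le (S : PosSys N p f g) {k r : ℝ} (hk : 0 < k) (hr : k * ((N : ℝ) - 1) ≤ r) :
    hFun N r ≤ 1 + 1 / k := by
  have hn := S.n_ge
  have h0 : 0 < k * ((N : ℝ) - 1) := by positivity
  have hr0 := h0.trans_le hr
  unfold hFun
  have : ((N : ℝ) - 1) / r ≤ 1 / k := by
    rw [div_le_div_iff₀ hr0 hk]; linarith
  linarith

theorem f_anti (S : PosSys N p f g) (hg : ∀ r, 0 < r → 0 < g r) {r s : ℝ} (hr : 0 < r)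
    (hrs : r ≤ s) : f s ≤ f r :=
  le_of_deriv_nonpos hrs
    (fun t ht => S.df t (hr.trans_le ht.1) (hg t (hr.trans_le ht.1)).le)
    (fun t ht => neg_nonpos.2 (rpow_nonneg (hg t (hr.trans_le ht.1)).le _))

theorem f_strictAnti (S : PosSys N p f g) (hg : ∀ r, 0 < r → 0 < g r) :
    StrictAntiOn f (Ioi 0) := by
  refine strictAntiOn_of_hasDerivWithinAt_neg (convex_Ioi 0)
    (f' := fun r => -(g r ^ (1 / (p - 1))))
    (fun r hr => (S.df r hr (hg r hr).le).continuousAt.continuousWithinAt)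
    (fun r hr => ?_) (fun r hr => ?_)
  all_goals rw [interior_Ioi] at hr
  · exact (S.df r hr (hg r hr).le).hasDerivWithinAt
  · exact neg_neg_of_pos (rpow_pos_of_pos (hg r hr) _)

/-- A nonpositive value of `f` would drive `g` below `0`. -/
theorem f_pos (S : PosSys N p f g) (hg : ∀ r, 0 < r → 0 < g r) {r : ℝ} (hr : 0 < r) :
    0 < f r := by
  by_contra! hf
  have h1 : f (r + 1) < 0 :=
    (S.f_strictAnti hg hr (show (0:ℝ) < r + 1 by linarith) (by linarith)).trans_le hf
  refine not_pos_of_deriv_le (R := r + 1) (d := -f (r + 1)) (by linarith)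
    (fun t ht => S.dg t (by linarith) (hg t (by linarith)).le) (fun t ht => ?_)
    (fun t ht => hg t (by linarith))
  have ht0 : 0 < t := by linarith
  have := S.f_anti hg (by linarith) ht
  have := mul_nonneg (zero_le_one.trans (S.hFun_ge_one ht0)) (hg t ht0).le
  linarith

/-- If `f ≥ ε` throughout, then `g` stays away from `0` and `f` decreases linearly, which is
incompatible with `f > 0`. -/
theorem exists_f_lt (S : PosSys N p f g) (hg : ∀ r, 0 < r → 0 < g r) {ε : ℝ} (hε : 0 < ε) :
    ∃ r, 0 < r ∧ f r < ε := by
  by_contra! hf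
  have hn := S.n_ge
  set R := (N : ℝ) - 1 with hR
  have hgl : ∀ r, R + 1 ≤ r → ε / 4 ≤ g r := by
    intro r hr
    have := exp_mul_sub_le (φ := g) (k := 2) (c := ε / 2) (x := R) (y := r) (by linarith)
      (fun t ht => S.dg t (by linarith [ht.1]) (hg t (by linarith [ht.1])).le) (fun t ht => ?_)
    · have hR0 : 0 < R := by linarith
      have e1 : Real.exp (2 * R) * (g R - ε / 2) ≥ Real.exp (2 * R) * (- (ε / 2)) := by
        have := hg R hR0
        gcongr; linarith
      have e2 : 2 * Real.exp (2 * R) ≤ Real.exp (2 * r) := by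
        have h1 : Real.exp (2 * R + 2) ≤ Real.exp (2 * r) := Real.exp_le_exp.2 (by linarith)
        have h2 := Real.add_one_le_exp (2 : ℝ)
        rw [Real.exp_add] at h1
        nlinarith [Real.exp_pos (2 * R)]
      by_contra! hlt
      have h3 := Real.exp_pos (2 * r)
      nlinarith
    · have ht0 : 0 < t := by linarith [ht.1]
      have h1 := hf t ht0
      have h2 := S.hFun_le (k := 1) one_pos (r := t) (by linarith [ht.1])
      have h3 := mul_le_mul_of_nonneg_right h2 (hg t ht0).le
      linarith
  refine not_pos_of_deriv_le (R := R + 1) (d := (ε / 4) ^ (1 / (p - 1))) (by positivity)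
    (fun t ht => S.df t (by linarith) (hg t (by linarith)).le)
    (fun t ht => ?_) (fun t ht => S.f_pos hg (by linarith))
  have : 0 < p - 1 := by linarith [S.hp1]
  exact neg_le_neg (rpow_le_rpow (by positivity) (hgl t ht) (by positivity))

theorem tendsto_f (S : PosSys N p f g) (hg : ∀ r, 0 < r → 0 < g r) :
    Tendsto f atTop (𝓝 0) := by
  rw [tendsto_order]
  refine ⟨fun a ha => ?_, fun a ha => ?_⟩
  · filter_upwards [eventually_gt_atTop 0] with r hr using ha.trans (S.f_pos hg hr)
  · obtain ⟨r, hr, hra⟩ := S.exists_f_lt hg ha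
    filter_upwards [eventually_ge_atTop r] with s hs using (S.f_anti hg hr hs).trans_lt hra

/-- Linear comparison in `g' ≤ f - g` with `f → 0`. -/
theorem tendsto_g (S : PosSys N p f g) (hg : ∀ r, 0 < r → 0 < g r) :
    Tendsto g atTop (𝓝 0) := by
  rw [tendsto_order]
  refine ⟨fun a ha => ?_, fun a ha => ?_⟩
  · filter_upwards [eventually_gt_atTop 0] with r hr using ha.trans (hg r hr)
  obtain ⟨R, hR, hRa⟩ := S.exists_f_lt hg (half_pos ha)
  have hlim : Tendsto (fun r => a / 2 + Real.exp R * g R * Real.exp (-r)) atTop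
      (𝓝 (a / 2 + Real.exp R * g R * 0)) :=
    ((Real.tendsto_exp_neg_atTop_nhds_zero).const_mul _).const_add _
  have h2 := hlim.eventually (gt_mem_nhds (show a / 2 + Real.exp R * g R * 0 < a by linarith))
  filter_upwards [h2, eventually_ge_atTop R] with r hr hRr
  refine lt_of_le_of_lt ?_ hr
  have := exp_mul_sub_le (φ := fun s => -g s) (k := 1) (c := -(a / 2)) hRr
    (fun t ht => (S.dg t (hR.trans_le ht.1) (hg t (hR.trans_le ht.1)).le).neg) (fun t ht => ?_)
  · simp only [one_mul] at this
    have e : Real.exp r * Real.exp (-r) = 1 := by rw [← Real.exp_add]; simp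
    have h0 := Real.exp_pos r
    have h1 := Real.exp_pos R
    refine le_of_mul_le_mul_left ?_ h0
    have : Real.exp r * (a / 2 + Real.exp R * g R * Real.exp (-r))
        = Real.exp r * (a / 2) + Real.exp R * g R := by linear_combination Real.exp R * g R * e
    have := mul_pos h1 ha
    linarith
  · have ht0 := hR.trans_le ht.1
    have := S.f_anti hg hR ht.1
    have := mul_le_mul_of_nonneg_right (S.hFun_ge_one ht0) (hg t ht0).le
    linarith

theorem hasDerivAt_w (S : PosSys N p f g) {r : ℝ} (hr : 0 < r) (hg : 0 ≤ g r) :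
    HasDerivAt (fun s => rho N s * g s) (rho N r * f r) r := by
  refine ((hasDerivAt_rho (by have := S.hN; omega) hr).mul (S.dg r hr hg)).congr_deriv ?_
  ring

/-! ### The dichotomy for `f / g` -/

/-- If `f ≤ ε g` near infinity with `ε = (2 - p)/2` then `w` stays bounded: `w = O(e^{εr})` gives
`f = O(e^{-kr})` with `k > 1`, so that `w' = ρ f` is integrable. -/
theorem w_bounded (S : PosSys N p f g) (hg : ∀ r, 0 < r → 0 < g r) {R : ℝ}
    (hR : 1 ≤ R) (h : ∀ r, R ≤ r → f r ≤ (2 - p) / 2 * g r) :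
    ∃ M, ∀ r, 0 < r → |rho N r * g r| ≤ M := by
  have h1 : 0 < p - 1 := by linarith [S.hp1]
  have hp2 := S.hp2
  have pos : ∀ r, R ≤ r → 0 < r := fun r hr => by linarith
  obtain ⟨C, hC0, hC⟩ : ∃ C, 0 < C ∧ ∀ r, R ≤ r →
      g r ≤ C * Real.exp (-(p / 2) * r) := by
    refine ⟨Real.exp (-((2 - p) / 2) * R) * (rho N R * g R),
      mul_pos (Real.exp_pos _) (mul_pos (rho_pos N (pos R le_rfl)) (hg R (pos R le_rfl))),
      fun r hr => ?_⟩
    have := exp_mul_sub_le (φ := fun s => -(rho N s * g s)) (k := -((2 - p) / 2)) (c := 0) hr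
      (fun t ht => (S.hasDerivAt_w (pos t ht.1) (hg t (pos t ht.1)).le).neg) (fun t ht => by
        have := mul_le_mul_of_nonneg_left (h t ht.1) (rho_pos N (pos t ht.1)).le
        linarith)
    have hρ : Real.exp r ≤ rho N r := by
      unfold rho
      have := one_le_pow₀ (hR.trans hr) (n := N - 1)
      have := Real.exp_pos r
      nlinarith
    have e : Real.exp (-((2 - p) / 2) * r) * Real.exp r = Real.exp (p / 2 * r) := by
      rw [← Real.exp_add]; congr 1; ring
    have e2 : Real.exp (p / 2 * r) * Real.exp (-(p / 2) * r) = 1 := by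
      rw [← Real.exp_add]; simp
    have h3 : Real.exp (p / 2 * r) * g r ≤ Real.exp (-((2 - p) / 2) * R) * (rho N R * g R) := by
      have h4 := mul_le_mul_of_nonneg_left (mul_le_mul_of_nonneg_right hρ (hg r (pos r hr)).le)
        (Real.exp_pos (-((2 - p) / 2) * r)).le
      rw [← mul_assoc, e] at h4
      linarith
    have h5 := mul_le_mul_of_nonneg_right h3 (Real.exp_pos (-(p / 2) * r)).le
    calc g r = Real.exp (p / 2 * r) * Real.exp (-(p / 2) * r) * g r := by rw [e2, one_mul]
      _ = Real.exp (p / 2 * r) * g r * Real.exp (-(p / 2) * r) := by ring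
      _ ≤ _ := h5
  -- `k = (1 - ε) / (p - 1)` with `ε = (2 - p) / 2`, the decay rate of `g ^ (1 / (p - 1))`
  set k := p / (2 * (p - 1)) with hk
  have hk1 : 1 < k := by rw [hk, lt_div_iff₀ (by positivity)]; linarith
  set D := C ^ (1 / (p - 1)) with hD
  have hD0 : 0 < D := rpow_pos_of_pos hC0 _
  have hgq : ∀ r, R ≤ r → g r ^ (1 / (p - 1)) ≤ D * Real.exp (-k * r) := by
    intro r hr
    refine (rpow_le_rpow (hg r (pos r hr)).le (hC r hr) (by positivity)).trans_eq ?_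
    rw [mul_rpow hC0.le (Real.exp_pos _).le, ← Real.exp_mul]
    congr 2
    rw [hk]; field_simp
  have hfe : ∀ r, R ≤ r → f r ≤ D / k * Real.exp (-k * r) := by
    intro r hr
    refine ge_of_tendsto' (x := atTop) (f := fun s : ℝ => f (max r s) + D / k * Real.exp (-k * r))
      ?_ (fun s => ?_)
    · have : Tendsto (fun s : ℝ => f (max r s)) atTop (𝓝 0) :=
        (S.tendsto_f hg).comp (tendsto_atTop_mono (fun s => le_max_right r s) tendsto_id)
      simpa using this.add_const (D / k * Real.exp (-k * r))
    · have := le_of_deriv_nonneg (φ := fun t => f t - D / k * Real.exp (-k * t))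
        (φ' := fun t => -(g t ^ (1 / (p - 1))) + D * Real.exp (-k * t))
        (le_max_left r s) (fun t ht => ?_) (fun t ht => ?_)
      · have h3 : 0 ≤ D / k * Real.exp (-k * max r s) := by positivity
        linarith
      · have ht0 := hr.trans ht.1
        have := (S.df t (pos t ht0) (hg t (pos t ht0)).le).sub
          (((hasDerivAt_id t).const_mul (-k)).exp.const_mul (D / k))
        refine this.congr_deriv ?_
        simp only [id]
        field_simp
        ring
      · have := hgq t (hr.trans ht.1)
        linarith
  -- half of the surplus `k - 1` absorbs the polynomial factor of `ρ`
  set δ := (k - 1) / 2 with hδ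
  have hδ0 : 0 < δ := by rw [hδ]; linarith
  obtain ⟨B, hB0, hB⟩ : ∃ B : ℝ, 0 < B ∧ ∀ r : ℝ, 0 < r → r ^ (N - 1) ≤ B * Real.exp (δ * r) := by
    refine ⟨(N - 1).factorial / δ ^ (N - 1), by positivity, fun r hr => ?_⟩
    have := Real.pow_div_factorial_le_exp (δ * r) (by positivity) (N - 1)
    rw [mul_pow, div_le_iff₀ (by positivity)] at this
    rw [div_mul_eq_mul_div, le_div_iff₀ (by positivity)]
    linarith
  have hwd : ∀ r, R ≤ r → rho N r * f r ≤ B * (D / k) * Real.exp (-δ * r) := by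
    intro r hr
    unfold rho
    calc r ^ (N - 1) * Real.exp r * f r
        ≤ B * Real.exp (δ * r) * Real.exp r * (D / k * Real.exp (-k * r)) := by
          gcongr
          · exact (S.f_pos hg (pos r hr)).le
          · exact hB r (pos r hr)
          · exact hfe r hr
      _ = B * (D / k) * (Real.exp (δ * r) * Real.exp r * Real.exp (-k * r)) := by ring
      _ = _ := by
          rw [← Real.exp_add, ← Real.exp_add]; congr 2; rw [hδ]; ring
  have mono : ∀ r s, 0 < r → r ≤ s → rho N r * g r ≤ rho N s * g s := fun r s hr hrs =>
    le_of_deriv_nonneg (φ := fun s => rho N s * g s) hrs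
      (fun t ht => S.hasDerivAt_w (hr.trans_le ht.1) (hg t (hr.trans_le ht.1)).le)
      (fun t ht => (mul_pos (rho_pos N (hr.trans_le ht.1)) (S.f_pos hg (hr.trans_le ht.1))).le)
  refine ⟨rho N R * g R + B * (D / k) / δ * Real.exp (-δ * R), fun r hr => ?_⟩
  rw [abs_of_pos (mul_pos (rho_pos N hr) (hg r hr))]
  refine (mono r (max R r) hr (le_max_right R r)).trans ?_
  have := le_of_deriv_nonpos
    (φ := fun t => rho N t * g t + B * (D / k) / δ * Real.exp (-δ * t))
    (φ' := fun t => rho N t * f t - B * (D / k) * Real.exp (-δ * t))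
    (le_max_left R r) (fun t ht => ?_) (fun t ht => ?_)
  · have h3 : 0 ≤ B * (D / k) / δ * Real.exp (-δ * max R r) := by positivity
    linarith
  · have := (S.hasDerivAt_w (pos t ht.1) (hg t (pos t ht.1)).le).add
      (((hasDerivAt_id t).const_mul (-δ)).exp.const_mul (B * (D / k) / δ))
    refine this.congr_deriv ?_
    simp only [id]
    field_simp
    ring
  · have := hwd t ht.1
    linarith

/-- `g ^ (1 / (p - 1))` is negligible compared with `g`, because `1 / (p - 1) > 1` and `g → 0`. -/
theorem eventually_gpow_le (S : PosSys N p f g) (hg : ∀ r, 0 < r → 0 < g r) {η : ℝ} (hη : 0 < η) :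
    ∀ᶠ r in atTop, g r ^ (1 / (p - 1)) ≤ η * g r := by
  have h1 : 0 < p - 1 := by linarith [S.hp1]
  have hq : 0 < 1 / (p - 1) - 1 := by
    have : 1 < 1 / (p - 1) := by rw [lt_div_iff₀ h1]; linarith [S.hp2]
    linarith
  have h2 := (S.tendsto_g hg).rpow_const (p := 1 / (p - 1) - 1) (Or.inr hq.le)
  rw [zero_rpow hq.ne'] at h2
  filter_upwards [h2.eventually (gt_mem_nhds hη), eventually_gt_atTop 0] with r hr hr0
  have hgr := hg r hr0
  rw [rpow_sub_one hgr.ne', div_lt_iff₀ hgr] at hr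
  exact hr.le

/-- Once `f ≥ ε g` holds at one large radius it persists, because `e^{εr}(f - ε g)` increases. -/
theorem f_ge_persist (S : PosSys N p f g) (hg : ∀ r, 0 < r → 0 < g r) {ε : ℝ} (h0 : 0 < ε)
    (h1 : ε < 1) (hfr : ∃ᶠ r in atTop, ε * g r ≤ f r) : ∀ᶠ r in atTop, ε * g r ≤ f r := by
  have hη : 0 < ε * (1 - ε) := mul_pos h0 (by linarith)
  obtain ⟨R, hR⟩ := eventually_atTop.1 ((S.eventually_gpow_le hg hη).and (eventually_gt_atTop 0))
  obtain ⟨r0, hr0f, hr0⟩ := (hfr.and_eventually (eventually_ge_atTop R)).exists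
  filter_upwards [eventually_ge_atTop r0] with r hr
  have := exp_mul_sub_le (φ := fun t => f t - ε * g t) (k := ε) (c := 0) hr
    (fun t ht => ?_) (fun t ht => ?_) (φ' := fun t =>
      -(g t ^ (1 / (p - 1))) - ε * (f t - hFun N t * g t))
  · have h2 : 0 ≤ Real.exp (ε * r0) * (f r0 - ε * g r0 - 0) :=
      mul_nonneg (Real.exp_pos _).le (by linarith)
    have := nonneg_of_mul_nonneg_right (h2.trans this) (Real.exp_pos _)
    linarith
  · have ht0 := (hR t (hr0.trans ht.1)).2
    exact (S.df t ht0 (hg t ht0).le).sub ((S.dg t ht0 (hg t ht0).le).const_mul ε)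
  · obtain ⟨h2, ht0⟩ := hR t (hr0.trans ht.1)
    have h3 := mul_le_mul_of_nonneg_right (S.hFun_ge_one ht0) (mul_pos h0 (hg t ht0)).le
    linarith

/-- If `w` is unbounded then eventually `f / g ≥ 3 / 4`; any constant between
`2(p - 1) / (3p - 2)` and `1` would do. -/
theorem f_ge (S : PosSys N p f g) (hg : ∀ r, 0 < r → 0 < g r)
    (hw : ¬ ∃ M, ∀ r, 0 < r → |rho N r * g r| ≤ M) : ∀ᶠ r in atTop, 3 / 4 * g r ≤ f r := by
  have hp1 := S.hp1
  have hp2 := S.hp2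
  set ε := (2 - p) / 2 with hε
  have hε0 : 0 < ε := by rw [hε]; linarith
  have e1 : ∀ᶠ r in atTop, ε * g r ≤ f r := by
    refine S.f_ge_persist hg hε0 (by rw [hε]; linarith) ?_
    by_contra hcon
    rw [not_frequently] at hcon
    obtain ⟨R, hR⟩ := eventually_atTop.1 hcon
    refine hw (S.w_bounded hg (R := max 1 R) (le_max_left _ _) fun r hr => ?_)
    exact (not_le.1 (hR r ((le_max_right _ _).trans hr))).le
  refine S.f_ge_persist hg (by norm_num) (by norm_num) ?_
  by_contra hcon
  rw [not_frequently] at hcon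
  obtain ⟨R, hR⟩ := eventually_atTop.1 (((e1.and hcon).and
    (S.eventually_gpow_le hg (show 0 < ε / 8 by linarith))).and (eventually_gt_atTop 0))
  -- `u = f/g` solves `u' = u (h - u) - g^{q-1}`, so it would grow linearly while `ε ≤ u < 3/4`
  refine not_pos_of_deriv_le (R := R) (φ := fun r => 3 / 4 - f r / g r) (d := ε / 8)
    (φ' := fun r => -((-(g r ^ (1 / (p - 1))) * g r - f r * (f r - hFun N r * g r)) / g r ^ 2))
    (by linarith) (fun r hr => ?_) (fun r hr => ?_) (fun r hr => ?_)
  · have hr0 := (hR r hr).2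
    have hgr := hg r hr0
    exact ((S.df r hr0 hgr.le).div (S.dg r hr0 hgr.le) hgr.ne').const_sub _
  · obtain ⟨⟨⟨h1, h2⟩, h3⟩, hr0⟩ := hR r hr
    have hgr := hg r hr0
    have hfr := S.f_pos hg hr0
    have hh := S.hFun_ge_one hr0
    push Not at h2
    rw [neg_le_neg_iff, le_div_iff₀ (by positivity)]
    have h4 : 1 / 4 * g r ≤ hFun N r * g r - f r := by nlinarith
    have h5 : ε * g r * (1 / 4 * g r) ≤ f r * (hFun N r * g r - f r) :=
      mul_le_mul h1 h4 (by positivity) hfr.le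
    have h6 := mul_le_mul_of_nonneg_right h3 hgr.le
    nlinarith
  · obtain ⟨⟨⟨h1, h2⟩, h3⟩, hr0⟩ := hR r hr
    have hgr := hg r hr0
    push Not at h2
    have : f r / g r < 3 / 4 := by rwa [div_lt_iff₀ hgr]
    linarith

theorem tendsto_K (S : PosSys N p f g) (hg : ∀ r, 0 < r → 0 < g r)
    (hw : ¬ ∃ M, ∀ r, 0 < r → |rho N r * g r| ≤ M) : Tendsto (KFun N p f g) atTop atBot := by
  have hp1 := S.hp1
  have hp2 := S.hp2
  have hn := S.n_ge
  have hD : 0 < 3 * p - 2 := by linarith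
  have h1 : 0 < p - 1 := by linarith
  have h2 : 0 < 2 - p := by linarith
  have hP : Tendsto (fun r : ℝ => PolyG ((N : ℝ) - 1) p (1 / r)) atTop
      (𝓝 (PolyG ((N : ℝ) - 1) p 0)) := by
    have hc : Continuous (PolyG ((N : ℝ) - 1) p) := by unfold PolyG; fun_prop
    have hi : Tendsto (fun r : ℝ => 1 / r) atTop (𝓝 0) := by
      simpa using tendsto_inv_atTop_zero (𝕜 := ℝ)
    exact (hc.tendsto 0).comp hi
  have hP0 : PolyG ((N : ℝ) - 1) p 0 < -((p - 1) * (2 - p)) := by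
    have := mul_pos h1 h2
    unfold PolyG
    linarith
  obtain ⟨R, hR⟩ := eventually_atTop.1 (((hP.eventually (gt_mem_nhds hP0)).and (S.f_ge hg hw)).and
    (eventually_ge_atTop (2 * ((N : ℝ) - 1))))
  have pos : ∀ r, R ≤ r → 0 < r := fun r hr => by linarith [(hR r hr).2]
  have hAR : 0 < alphaFun N p R * g R ^ 2 :=
    mul_pos (alpha_pos N p (pos R le_rfl)) (pow_pos (hg R (pos R le_rfl)) 2)
  -- `α g²` increases, since `(α g²)' = 2 α g (f - c h g)` with `c h ≤ 3/4`
  have hA : ∀ r, R ≤ r → alphaFun N p R * g R ^ 2 ≤ alphaFun N p r * g r ^ 2 := by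
    intro r hr
    refine le_of_deriv_nonneg (φ := fun t => alphaFun N p t * g t ^ 2) (φ' := fun t =>
      2 * alphaFun N p t * g t * (f t - 2 * (p - 1) / (3 * p - 2) * hFun N t * g t)) hr
      (fun t ht => ?_) (fun t ht => ?_)
    · have ht0 := pos t ht.1
      refine ((hasDerivAt_alpha (N := N) (by have := S.hN; omega) p ht0).mul
        ((S.dg t ht0 (hg t ht0).le).pow 2)).congr_deriv ?_
      simp only [Pi.pow_apply, Nat.reduceSub, pow_one, Nat.cast_ofNat]
      obtain ⟨D, hDe⟩ : ∃ D, D = 3 * p - 2 := ⟨_, rfl⟩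
      rw [← hDe] at hD ⊢
      field_simp
      rw [hDe]
      ring
    · have ht0 := pos t ht.1
      obtain ⟨⟨_, h3⟩, h4⟩ := hR t ht.1
      have hgt := hg t ht0
      have hα := alpha_pos N p ht0
      refine mul_nonneg (by positivity) ?_
      have h5 : 2 * (p - 1) / (3 * p - 2) ≤ 1 / 2 := by rw [div_le_iff₀ hD]; linarith
      have h6 := S.hFun_le two_pos h4
      have h7 := S.hFun_ge_one ht0
      have h8 : 2 * (p - 1) / (3 * p - 2) * hFun N t ≤ 1 / 2 * (1 + 1 / 2) :=
        mul_le_mul h5 h6 (by linarith) (by norm_num)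
      have := mul_le_mul_of_nonneg_right h8 hgt.le
      linarith
  set d := p / (3 * p - 2) ^ 3 * ((p - 1) * (2 - p)) * (alphaFun N p R * g R ^ 2) with hd
  have hd0 : 0 < d := by positivity
  refine tendsto_atBot_mono' atTop (f₁ := fun r => KFun N p f g R + d * R + -d * r) ?_ ?_
  · filter_upwards [eventually_ge_atTop R] with r hr
    have := le_of_deriv_nonpos (φ := fun t => KFun N p f g t + d * t) hr
      (fun t ht => (S.hasDerivAt_K (pos t ht.1) (hg t (pos t ht.1)).le).add
        ((hasDerivAt_id t).const_mul d)) (fun t ht => ?_)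
    · linarith
    · have h3 := (hR t ht.1).1.1
      have h4 := hA t ht.1
      have h5 : 0 < p / (3 * p - 2) ^ 3 := by positivity
      have h6 : PolyG ((N : ℝ) - 1) p (1 / t) * (alphaFun N p t * g t ^ 2)
          ≤ -((p - 1) * (2 - p)) * (alphaFun N p R * g R ^ 2) := by
        have e1 := mul_le_mul_of_nonneg_right h3.le (hAR.le.trans h4)
        have e2 := mul_le_mul_of_nonneg_left h4 (mul_pos h1 h2).le
        linarith
      have h7 := mul_le_mul_of_nonneg_left h6 h5.le
      simp only [mul_one]
      rw [hd]
      linarith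
  · exact tendsto_atBot_add_const_left _ _ (tendsto_id.const_mul_atTop_of_neg (by linarith))

/-! ### Consequences of a negative value -/

/-- Once its growth factor is negative, the functional is nonincreasing as long as `g ≥ 0`. -/
theorem K_le (S : PosSys N p f g) {R s : ℝ} (hR : 0 < R) (hRs : R ≤ s)
    (hP : PolyG ((N : ℝ) - 1) p (1 / R) < 0) (hg : ∀ t, R ≤ t → t ≤ s → 0 ≤ g t) :
    KFun N p f g s ≤ KFun N p f g R := by
  refine le_of_deriv_nonpos hRs
    (fun t ht => S.hasDerivAt_K (hR.trans_le ht.1) (hg t ht.1 ht.2)) (fun t ht => ?_)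
  have ht0 := hR.trans_le ht.1
  have h1 : PolyG ((N : ℝ) - 1) p (1 / t) ≤ 0 := by
    by_contra! h
    exact absurd (S.polyG_nonneg_of hR ht.1 h.le) (not_le.2 hP)
  have hD : 0 < 3 * p - 2 := by linarith [S.hp1]
  have hp : 0 < p := by linarith
  have hα := alpha_pos N p ht0
  refine mul_nonpos_of_nonpos_of_nonneg (mul_nonpos_of_nonneg_of_nonpos (by positivity) h1)
    (by positivity)

/-- `g` has no zero after `R`: the functional would be nonnegative there, yet at most its negative
value at `R`. -/
theorem g_pos_of_K_neg (S : PosSys N p f g) {R : ℝ} (hR : 0 < R)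
    (hcont : ContinuousOn g (Ici R)) (hg : 0 < g R)
    (hP : PolyG ((N : ℝ) - 1) p (1 / R) < 0) (hK : KFun N p f g R < 0) :
    ∀ r, R ≤ r → 0 < g r := by
  intro r hr
  by_contra! hgr
  -- `s` is the first zero of `g` beyond `R`
  set Z := {t | t ∈ Icc R r ∧ g t ≤ 0} with hZ
  have hZc : IsClosed Z :=
    (hcont.mono Icc_subset_Ici_self).preimage_isClosed_of_isClosed isClosed_Icc isClosed_Iic
  have hZb : BddBelow Z := ⟨R, fun t ht => ht.1.1⟩
  have hs := hZc.csInf_mem ⟨r, ⟨⟨hr, le_rfl⟩, hgr⟩⟩ hZb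
  set s := sInf Z with hsd
  have hRs : R ≤ s := hs.1.1
  have hlt : ∀ t, R ≤ t → t < s → 0 < g t := by
    intro t ht hts
    by_contra! h
    exact absurd (csInf_le hZb (show t ∈ Z from ⟨⟨ht, hts.le.trans hs.1.2⟩, h⟩)) (not_le.2 hts)
  have hRs' : R < s := lt_of_le_of_ne hRs fun h => by
    have := hs.2; rw [← h] at this; linarith
  have hs0 : 0 ≤ g s := by
    have hc : ContinuousWithinAt g (Ioo R s) s :=
      (hcont s hRs).mono fun t ht => ht.1.le
    have : NeBot (𝓝[Ioo R s] s) := by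
      rw [← mem_closure_iff_nhdsWithin_neBot, closure_Ioo hRs'.ne]
      exact ⟨hRs, le_rfl⟩
    exact ge_of_tendsto hc (eventually_nhdsWithin_of_forall fun t ht => (hlt t ht.1.le ht.2).le)
  have hgs : g s = 0 := le_antisymm hs.2 hs0
  have h1 := S.K_le hR hRs hP fun t ht hts => by
    rcases hts.lt_or_eq with h | h
    · exact (hlt t ht h).le
    · rw [h]; exact hs0
  have hp : 0 < p := by linarith [S.hp1]
  have hp1 : 0 < p - 1 := by linarith [S.hp1]
  have h2 := S.K_ge (hR.trans_le hRs) hs0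
  rw [hgs] at h2
  simp only [ne_eq, OfNat.ofNat_ne_zero, not_false_eq_true, zero_pow, mul_zero, neg_zero] at h2
  linarith

/-- For bounded `w` the lower bound `-h² α g² = -h² ρ ^ (2p / (3p - 2) - 2) w²` tends to `0`. -/
theorem w_unbounded_of_K_neg (S : PosSys N p f g) {R : ℝ} (hR : 0 < R)
    (hg : ∀ r, 0 < r → 0 < g r) (hP : PolyG ((N : ℝ) - 1) p (1 / R) < 0)
    (hK : KFun N p f g R < 0) : ¬ ∃ M, ∀ r, 0 < r → |rho N r * g r| ≤ M := by
  rintro ⟨M, hM⟩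
  have hn := S.n_ge
  have hD : 0 < 3 * p - 2 := by linarith [S.hp1]
  have hρ : Tendsto (rho N) atTop atTop := by
    refine tendsto_atTop_mono' atTop ?_ Real.tendsto_exp_atTop
    filter_upwards [eventually_ge_atTop 1] with r hr
    unfold rho
    have := one_le_pow₀ hr (n := N - 1)
    have := Real.exp_pos r
    nlinarith
  have he : 0 < 2 - 2 * p / (3 * p - 2) := by
    have : 2 * p / (3 * p - 2) < 2 := by rw [div_lt_iff₀ hD]; linarith [S.hp1]
    linarith
  have hlim := ((tendsto_rpow_neg_atTop he).comp hρ).const_mul (-(4 * M ^ 2))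
  rw [mul_zero] at hlim
  have : (0 : ℝ) ≤ KFun N p f g R := by
    refine le_of_tendsto hlim ?_
    filter_upwards [eventually_ge_atTop R, eventually_ge_atTop (1 * ((N : ℝ) - 1))] with r hr hrn
    have hr0 := hR.trans_le hr
    have hgr := hg r hr0
    refine le_trans ?_ ((S.K_ge hr0 hgr.le).trans
      (S.K_le hR hr hP fun t ht _ => (hg t (hR.trans_le ht)).le))
    have h1 := S.hFun_le one_pos hrn
    have h2 := S.hFun_ge_one hr0
    have hρ0 := rho_pos N hr0
    have h3 : hFun N r ^ 2 ≤ 4 := by nlinarith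
    have h4 : (rho N r * g r) ^ 2 ≤ M ^ 2 := sq_le_sq' (by
      have := hM r hr0; rw [abs_le] at this; exact this.1) ((le_abs_self _).trans (hM r hr0))
    have e : alphaFun N p r = rho N r ^ (-(2 - 2 * p / (3 * p - 2))) * rho N r ^ 2 := by
      unfold alphaFun
      rw [← rpow_natCast (rho N r) 2, ← rpow_add hρ0]
      congr 1
      push_cast; ring
    have hB : 0 < rho N r ^ (-(2 - 2 * p / (3 * p - 2))) := rpow_pos_of_pos hρ0 _
    simp only [Function.comp]
    rw [e]
    generalize rho N r ^ (-(2 - 2 * p / (3 * p - 2))) = B at hB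
    have h5 : hFun N r ^ 2 * (rho N r * g r) ^ 2 ≤ 4 * M ^ 2 :=
      mul_le_mul h3 h4 (by positivity) (by norm_num)
    have h6 := mul_le_mul_of_nonneg_right h5 hB.le
    nlinarith
  linarith

end PosSys

/-! ### Reduction of the profile equation -/

theorem gFun_eq_of_nonpos {p : ℝ} (hp : 1 < p) {f' : ℝ → ℝ} {r : ℝ} (h : f' r ≤ 0) :
    gFun p f' r = |f' r| ^ (p - 1) := by
  unfold gFun
  rcases h.lt_or_eq with h | h
  · have h0 : 0 < |f' r| := abs_pos.2 h.ne
    have : |f' r| ^ (p - 1) = |f' r| ^ (p - 2) * |f' r| := by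
      rw [← rpow_add_one h0.ne']; congr 1; ring
    rw [this, abs_of_neg h]; ring
  · rw [h, mul_zero, neg_zero, abs_zero, zero_rpow (by linarith)]

/-- The profile equation solved for `g' = -F'`, using `|f'| ^ (p - 1) = g` where `g ≥ 0`. -/
theorem neg_F'_eq {N : ℕ} {p : ℝ} (hp : 1 < p) {f f' F' : ℝ → ℝ} {r : ℝ}
    (h : F' r + (((N : ℝ) - 1) / r) * (|f' r| ^ (p - 2) * f' r) + f r - |f' r| ^ (p - 1) = 0)
    (hg : 0 ≤ gFun p f' r) : -F' r = f r - hFun N r * gFun p f' r := by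
  have hle : f' r ≤ 0 := by
    by_contra! h
    have : 0 < |f' r| ^ (p - 2) * f' r := mul_pos (rpow_pos_of_pos (abs_pos.2 h.ne') _) h
    unfold gFun at hg
    linarith
  rw [← gFun_eq_of_nonpos hp hle] at h
  have e : |f' r| ^ (p - 2) * f' r = -gFun p f' r := by unfold gFun; ring
  rw [e] at h
  unfold hFun
  linear_combination -h

theorem IsProfileSol.posSys {N : ℕ} (hN : 2 ≤ N) {p : ℝ}
    (hp1 : 2 * (N : ℝ) / ((N : ℝ) + 1) < p) (hp2 : p < 2) {a : ℝ}
    {f f' F' : ℝ → ℝ} (hf : IsProfileSol N p a f f' F') : PosSys N p f (gFun p f') := by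
  obtain ⟨h1, -, h3, -, h5, -, -⟩ := hf
  have hNr : (2 : ℝ) ≤ N := by exact_mod_cast hN
  rw [div_lt_iff₀ (by positivity)] at hp1
  have hp : 1 < p := by nlinarith
  have key : ∀ r, 0 ≤ gFun p f' r → f' r = -(gFun p f' r ^ (1 / (p - 1))) := by
    intro r hg
    have hle : f' r ≤ 0 := by
      by_contra! h
      have : 0 < |f' r| ^ (p - 2) * f' r := mul_pos (rpow_pos_of_pos (abs_pos.2 h.ne') _) h
      unfold gFun at hg
      linarith
    have e := gFun_eq_of_nonpos hp hle
    rw [e, ← rpow_mul (abs_nonneg _), mul_one_div, div_self (by linarith), rpow_one,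
      abs_of_nonpos hle, neg_neg]
  refine ⟨hN, hp, hp2, by linarith, fun r hr hg => ?_, fun r hr hg => ?_⟩
  · rw [← key r hg]
    exact (h1 r hr.le).hasDerivAt (Ici_mem_nhds hr)
  · have := ((h3 r hr.le).hasDerivAt (Ici_mem_nhds hr)).neg
    refine this.congr_deriv ?_
    exact neg_F'_eq hp (h5 r hr) hg

/-- `J(·;a)` takes a negative value somewhere on `(0, R₁(a))` (a point
`r̄ > 0` lies in `(0, R₁(a))` iff `g(·;a) > 0` on `(0, r̄]`) iff `g(·;a) > 0` on `(0,∞)`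
and `w(·;a)` is unbounded; moreover in that case `J(r;a) → -∞` as `r → ∞`. -/
theorem stmt16 (N : ℕ) (hN : 2 ≤ N) (p : ℝ)
    (hp1 : 2 * (N : ℝ) / ((N : ℝ) + 1) < p) (hp2 : p < 2)
    (a : ℝ) (ha : 0 < a)
    (f f' F' : ℝ → ℝ) (hf : IsProfileSol N p a f f' F') :
    ((∃ rb, 0 < rb ∧ (∀ s, 0 < s → s ≤ rb → 0 < gFun p f' s) ∧ Jfun N p f' F' rb < 0) ↔
      ((∀ r, 0 < r → 0 < gFun p f' r) ∧
        ¬ ∃ M : ℝ, ∀ r, 0 < r → |wFun N p f' r| ≤ M)) ∧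
    (((∀ r, 0 < r → 0 < gFun p f' r) ∧
        ¬ ∃ M : ℝ, ∀ r, 0 < r → |wFun N p f' r| ≤ M) →
      Filter.Tendsto (Jfun N p f' F') Filter.atTop Filter.atBot) := by
  have S := hf.posSys hN hp1 hp2
  have hJK : ∀ r, 0 < r → 0 ≤ gFun p f' r → Jfun N p f' F' r = KFun N p f (gFun p f') r := by
    intro r hr hg
    unfold Jfun KFun
    rw [neg_F'_eq S.hp1 (hf.2.2.2.2.1 r hr) hg]
  have hgd : ∀ r ∈ Ici (0 : ℝ), HasDerivWithinAt (gFun p f') (-F' r) (Ici 0) r :=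
    fun r hr => (hf.2.2.1 r hr).neg
  have main : ((∀ r, 0 < r → 0 < gFun p f' r) ∧
        ¬ ∃ M : ℝ, ∀ r, 0 < r → |wFun N p f' r| ≤ M) →
      Filter.Tendsto (Jfun N p f' F') Filter.atTop Filter.atBot := by
    rintro ⟨hg, hw⟩
    refine (S.tendsto_K hg hw).congr' ?_
    filter_upwards [eventually_gt_atTop 0] with r hr using (hJK r hr (hg r hr).le).symm
  refine ⟨⟨?_, fun h => ?_⟩, main⟩
  · rintro ⟨R, hR, hg, hJ⟩
    rw [hJK R hR (hg R hR le_rfl).le] at hJ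
    -- `g` vanishes at `0` and is differentiable there
    have hO : ∃ C, ∀ᶠ s in 𝓝[>] (0 : ℝ), gFun p f' s ≤ C * s := by
      have h0 : gFun p f' 0 = 0 := by simp [gFun, hf.2.2.2.2.2.2]
      have hd := ((hasDerivWithinAt_iff_tendsto_slope' (lt_irrefl 0)).1
        (hasDerivWithinAt_Ioi_iff_Ici.2 (hgd 0 self_mem_Ici))).eventually
        (gt_mem_nhds (lt_add_one (-F' 0)))
      refine ⟨-F' 0 + 1, ?_⟩
      filter_upwards [hd, self_mem_nhdsWithin] with s hs hs0
      have hs0 : 0 < s := hs0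
      rw [slope_def_field, h0, sub_zero, sub_zero, div_lt_iff₀ hs0] at hs
      exact hs.le
    have hP := S.polyG_neg_of_K_neg hR hg hO hJ
    have hcont : ContinuousOn (gFun p f') (Ici R) := fun r hr =>
      (hgd r (hR.le.trans hr)).continuousWithinAt.mono (Ici_subset_Ici.2 hR.le)
    have hg' : ∀ r, 0 < r → 0 < gFun p f' r := by
      intro r hr
      rcases le_total r R with h | h
      · exact hg r hr h
      · exact S.g_pos_of_K_neg hR hcont (hg R hR le_rfl) hP hJ r h
    exact ⟨hg', S.w_unbounded_of_K_neg hR hg' hP hJ⟩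
  · obtain ⟨R, hRJ, hR⟩ := (((main h).eventually (eventually_lt_atBot 0)).and
      (eventually_gt_atTop 0)).exists
    exact ⟨R, hR, fun s hs _ => h.1 s hs, hRJ⟩
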